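/- Define π_1(λ)=2−λ, π_2(λ)=π_1(λ)²−2, θ_3(λ)=1−λ, π_3(λ)=π_2(λ)²−2θ_3(λ)², θ_4(λ)=θ_3(λ)²−λ, π_4(λ)=π_3(λ)²−2θ_3(λ)²θ_4(λ)². Then π_3(λ) = 2 − 12λ + 18λ² − 8λ³ + λ⁴ and π_4(λ) = 2 − 32λ + 168λ² − 396λ³ + 472λ⁴ − 296λ⁵ + 98λ⁶ − 16λ⁷ + λ⁸; moreover −λ·π_1(λ)·π_2(λ)·π_3(λ) is the characteristic polynomial det(λI − L) of the graph Laplacian L of the DSC(1) tree of generation 3 (the tree on 8 vertices obtained by attaching a pendant vertex to every vertex at each of 3 steps, starting from a single vertex). -/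

import Mathlib

open Polynomial

/-- The DSC(1) tree of generation `n`: start from a single vertex `0`; at step
`k+1` (for `k = 0, …, n-1`), every existing vertex `v < 2^k` receives a new
pendant vertex `v + 2^k`. -/
def dscTree (n : ℕ) : SimpleGraph (Fin (2 ^ n)) :=
  SimpleGraph.fromRel (fun a b => ∃ k < n, (a : ℕ) < 2 ^ k ∧ (b : ℕ) = (a : ℕ) + 2 ^ k)

noncomputable instance (n : ℕ) : DecidableRel (dscTree n).Adj := Classical.decRel _

/-!
The tree of generation `n + 1` is the corona `G ∘ K₁` of the tree `G` of generation `n`, so with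
old vertices listed first its Laplacian `M` has the blocks `[[L + 1, -1], [-1, 1]]`, where `L` is
the Laplacian of `G`. These blocks commute, so by Silvester's theorem the determinant of
`a I - b M` can be computed blockwise:
`det (a I - b M) = det ((a - b) ((a - b) I - b L) - b² I) = det (a (a - 2b) I - b (a - b) L)`.
Thus passing to the previous generation acts on the pair `(a, b)`. In the coordinates `p = a - 2b`
and `b` this action is `(p, b) ↦ (p² - 2b², b (p + b))`, and it multiplies `a` by `p`; each
generation therefore contributes one factor `p` to the characteristic polynomial, starting from
`(a, b) = (X, 1)`.
-/

section Corona

variable {V : Type*}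

/-- The corona `G ∘ K₁`: every vertex `v` of `G` receives a new pendant neighbour. The original
vertex is encoded as `(0, v)` and its new neighbour as `(1, v)`. -/
def corona (G : SimpleGraph V) : SimpleGraph (Fin 2 × V) where
  Adj x y := (x.1 = 0 ∧ y.1 = 0 ∧ G.Adj x.2 y.2) ∨ (x.1 ≠ y.1 ∧ x.2 = y.2)
  symm := ⟨fun _ _ => Or.imp (fun ⟨hx, hy, h⟩ => ⟨hy, hx, h.symm⟩)
    (fun ⟨hne, h⟩ => ⟨hne.symm, h.symm⟩)⟩
  loopless := ⟨fun _ h => h.elim (fun h => G.irrefl h.2.2) (fun h => h.1 rfl)⟩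

theorem corona_adj {G : SimpleGraph V} {x y : Fin 2 × V} :
    (corona G).Adj x y ↔ (x.1 = 0 ∧ y.1 = 0 ∧ G.Adj x.2 y.2) ∨ (x.1 ≠ y.1 ∧ x.2 = y.2) :=
  Iff.rfl

variable [Fintype V] (G : SimpleGraph V) [DecidableRel (corona G).Adj]

theorem degree_corona_one (v : V) : (corona G).degree (1, v) = 1 := by
  classical
  have h := (corona G).degree_eq_sum_if_adj (R := ℕ) (1, v)
  simpa [-Finset.sum_boole, Fintype.sum_prod_type, corona_adj] using h

variable [DecidableRel G.Adj]

theorem degree_corona_zero (v : V) : (corona G).degree (0, v) = G.degree v + 1 := by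
  classical
  have h := (corona G).degree_eq_sum_if_adj (R := ℕ) (0, v)
  simpa [-Finset.sum_boole, Fintype.sum_prod_type, corona_adj,
    ← G.degree_eq_sum_if_adj (R := ℕ) v] using h

variable [DecidableEq V] {R : Type*}

theorem lapMatrix_corona [Ring R] :
    (corona G).lapMatrix R = Matrix.comp _ _ _ _ R !![G.lapMatrix R + 1, -1; -1, 1] := by
  ext ⟨i, v⟩ ⟨j, w⟩
  fin_cases i <;> fin_cases j <;> by_cases h : v = w <;>
    simp [SimpleGraph.lapMatrix, SimpleGraph.degMatrix, degree_corona_zero, degree_corona_one,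
      corona_adj, h]

theorem det_smul_one_sub_smul_lapMatrix_corona [CommRing R] (a b : R) :
    (a • 1 - b • (corona G).lapMatrix R).det =
      ((a * (a - 2 * b)) • 1 - (b * (a - b)) • G.lapMatrix R).det := by
  let M : Matrix (Fin 2) (Fin 2) R[X] := !![C (a - b) - C b * X, C b; C b, C (a - b)]
  let f : R[X] →+* Matrix V V R := (aeval (G.lapMatrix R) : R[X] →ₐ[R] Matrix V V R)
  have hblocks : a • 1 - b • (corona G).lapMatrix R = (M.map f).comp _ _ _ _ R := by
    rw [lapMatrix_corona]
    ext ⟨i, v⟩ ⟨j, w⟩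
    fin_cases i <;> fin_cases j <;> by_cases h : v = w <;>
      simp [M, f, Algebra.algebraMap_eq_smul_one, h, mul_add, sub_add_eq_sub_sub_swap]
  have hdet : M.det = C (a * (a - 2 * b)) - C (b * (a - b)) * X := by
    simp only [M, Matrix.det_fin_two_of, C_mul, C_sub, C_ofNat]
    ring
  rw [hblocks, ← Matrix.det_det, hdet]
  simp only [f, RingHom.coe_coe, map_sub (aeval _), map_mul (aeval _), aeval_C, aeval_X,
    Algebra.algebraMap_eq_smul_one, smul_one_mul]

end Corona

section Laplacian

variable {V W R S : Type*} [Fintype V] [Fintype W] [DecidableEq V] [DecidableEq W]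
  {G : SimpleGraph V} {H : SimpleGraph W} [DecidableRel G.Adj] [DecidableRel H.Adj]

theorem lapMatrix_submatrix_iso [AddGroupWithOne R] (e : G ≃g H) :
    (H.lapMatrix R).submatrix e e = G.lapMatrix R := by
  ext v w
  simp [SimpleGraph.lapMatrix, SimpleGraph.degMatrix, Matrix.diagonal_apply, e.map_adj_iff]

theorem det_smul_one_sub_smul_lapMatrix_congr [CommRing R] (e : G ≃g H) (a b : R) :
    (a • 1 - b • G.lapMatrix R).det = (a • 1 - b • H.lapMatrix R).det := by
  rw [← lapMatrix_submatrix_iso e, ← Matrix.det_submatrix_equiv_self e.toEquiv (a • 1 - _)]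
  simp [Matrix.submatrix_sub, Matrix.submatrix_smul, Matrix.submatrix_one _ e.injective]

variable (G)

theorem map_lapMatrix [Ring R] [Ring S] (f : R →+* S) :
    (G.lapMatrix R).map f = G.lapMatrix S := by
  ext v w
  simp [SimpleGraph.lapMatrix, SimpleGraph.degMatrix, Matrix.diagonal_apply, apply_ite f]

theorem charpoly_lapMatrix [CommRing R] :
    (G.lapMatrix R).charpoly = ((X : R[X]) • 1 - (1 : R[X]) • G.lapMatrix R[X]).det := by
  rw [Matrix.charpoly, Matrix.charmatrix, RingHom.mapMatrix_apply, map_lapMatrix, one_smul,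
    Matrix.smul_one_eq_diagonal, Matrix.scalar_apply]

end Laplacian

theorem dscTree_adj {n : ℕ} {v w : Fin (2 ^ n)} :
    (dscTree n).Adj v w ↔ ∃ k < n, ((v : ℕ) < 2 ^ k ∧ (w : ℕ) = v + 2 ^ k) ∨
      ((w : ℕ) < 2 ^ k ∧ (v : ℕ) = w + 2 ^ k) := by
  rw [dscTree, SimpleGraph.fromRel_adj]
  have hpos (k : ℕ) : 0 < 2 ^ k := by positivity
  grind

/-- The tree of generation `n + 1` as the corona of the tree of generation `n`; the vertex `(i, v)`
of the corona corresponds to `v + 2 ^ n * i`. -/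
def dscTreeSuccIso (n : ℕ) : corona (dscTree n) ≃g dscTree (n + 1) where
  toEquiv := finProdFinEquiv.trans (finCongr (pow_succ' 2 n).symm)
  map_rel_iff' := by
    rintro ⟨i, v⟩ ⟨j, w⟩
    have hv := v.is_lt
    have hw := w.is_lt
    -- This keeps the edges added before the last step among the vertices below `2 ^ n`.
    have hpow : ∀ k < n, 2 ^ k + 2 ^ k ≤ 2 ^ n := fun k hk => by
      simpa [pow_succ, mul_two] using Nat.pow_le_pow_right two_pos hk
    simp only [dscTree_adj, corona_adj, Nat.lt_add_one_iff_lt_or_eq]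
    fin_cases i <;> fin_cases j <;> simp [Fin.ext_iff] <;> grind

section Factorization

variable {R : Type*} [CommRing R]

/-- The recursion behind the factorization of the characteristic polynomial of the DSC(1) trees.
Its iterates at `(X - 2, 1)` are `(-π₁, 1)`, `(π₂, -θ₃)`, `(π₃, -θ₃ θ₄)`, …, where `π₁, π₂, …` are
the factors in the paper and `θ₃, θ₄, …` its auxiliary polynomials; up to sign, `θ` is the
multiplier `p + b` of the second coordinate. -/
def dscStep (x : R × R) : R × R :=
  (x.1 ^ 2 - 2 * x.2 ^ 2, x.2 * (x.1 + x.2))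

theorem det_smul_one_sub_smul_lapMatrix_dscTree (n : ℕ) (p b : R) :
    ((p + 2 * b) • 1 - b • (dscTree n).lapMatrix R).det =
      (p + 2 * b) * ∏ i ∈ Finset.range n, (dscStep^[i] (p, b)).1 := by
  induction n generalizing p b with
  | zero => simp [Matrix.det_unique, SimpleGraph.lapMatrix, SimpleGraph.degMatrix]
  | succ n ih =>
    classical
    have hstep : (p + 2 * b) * p = (dscStep (p, b)).1 + 2 * (dscStep (p, b)).2 := by
      simp only [dscStep]
      ring
    calc ((p + 2 * b) • 1 - b • (dscTree (n + 1)).lapMatrix R).det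
      _ = ((p + 2 * b) • 1 - b • (corona (dscTree n)).lapMatrix R).det :=
        (det_smul_one_sub_smul_lapMatrix_congr (dscTreeSuccIso n) _ _).symm
      _ = (((p + 2 * b) * p) • 1 - (b * (p + b)) • (dscTree n).lapMatrix R).det := by
        rw [det_smul_one_sub_smul_lapMatrix_corona]
        ring_nf
      _ = (p + 2 * b) * p * ∏ i ∈ Finset.range n, (dscStep^[i + 1] (p, b)).1 := by
        rw [hstep]
        exact ih _ _
      _ = (p + 2 * b) * ∏ i ∈ Finset.range (n + 1), (dscStep^[i] (p, b)).1 := by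
        rw [Finset.prod_range_succ', Function.iterate_zero_apply, mul_assoc, mul_comm p]

theorem charpoly_lapMatrix_dscTree (n : ℕ) :
    ((dscTree n).lapMatrix R).charpoly =
      X * ∏ i ∈ Finset.range n, (dscStep^[i] (X - 2, (1 : R[X]))).1 := by
  have h := det_smul_one_sub_smul_lapMatrix_dscTree n (X - 2) (1 : R[X])
  rwa [mul_one, sub_add_cancel, ← charpoly_lapMatrix] at h

theorem stmt_19_general (π₁ π₂ π₃ π₄ θ₃ θ₄ : R[X])
    (hπ₁ : π₁ = 2 - X) (hπ₂ : π₂ = π₁ ^ 2 - 2)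
    (hθ₃ : θ₃ = 1 - X) (hπ₃ : π₃ = π₂ ^ 2 - 2 * θ₃ ^ 2)
    (hθ₄ : θ₄ = θ₃ ^ 2 - X) (hπ₄ : π₄ = π₃ ^ 2 - 2 * θ₃ ^ 2 * θ₄ ^ 2) :
    π₃ = 2 - 12 * X + 18 * X ^ 2 - 8 * X ^ 3 + X ^ 4 ∧
    π₄ = 2 - 32 * X + 168 * X ^ 2 - 396 * X ^ 3 + 472 * X ^ 4 - 296 * X ^ 5
        + 98 * X ^ 6 - 16 * X ^ 7 + X ^ 8 ∧
    Matrix.charpoly ((dscTree 3).lapMatrix R) = -X * π₁ * π₂ * π₃ := by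
  have hstep₁ : dscStep (X - 2, 1) = (π₂, -θ₃) := by
    ext1 <;> simp only [dscStep, hπ₂, hπ₁, hθ₃] <;> ring
  have hstep₂ : (dscStep (π₂, -θ₃)).1 = π₃ := by simp only [dscStep, hπ₃, neg_sq]
  refine ⟨by subst_vars; ring, by subst_vars; ring, ?_⟩
  simp only [charpoly_lapMatrix_dscTree, Finset.prod_range_succ, Finset.prod_range_zero,
    Function.iterate_succ_apply, Function.iterate_zero_apply, hstep₁, hstep₂, hπ₁]
  ring

end Factorization

theorem stmt_19 (π₁ π₂ π₃ π₄ θ₃ θ₄ : Polynomial ℤ)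
    (hπ₁ : π₁ = 2 - X) (hπ₂ : π₂ = π₁ ^ 2 - 2)
    (hθ₃ : θ₃ = 1 - X) (hπ₃ : π₃ = π₂ ^ 2 - 2 * θ₃ ^ 2)
    (hθ₄ : θ₄ = θ₃ ^ 2 - X) (hπ₄ : π₄ = π₃ ^ 2 - 2 * θ₃ ^ 2 * θ₄ ^ 2) :
    π₃ = 2 - 12 * X + 18 * X ^ 2 - 8 * X ^ 3 + X ^ 4 ∧
    π₄ = 2 - 32 * X + 168 * X ^ 2 - 396 * X ^ 3 + 472 * X ^ 4 - 296 * X ^ 5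
        + 98 * X ^ 6 - 16 * X ^ 7 + X ^ 8 ∧
    Matrix.charpoly ((dscTree 3).lapMatrix ℤ) = -X * π₁ * π₂ * π₃ :=
  stmt_19_general π₁ π₂ π₃ π₄ θ₃ θ₄ hπ₁ hπ₂ hθ₃ hπ₃ hθ₄ hπ₄
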